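/- An M-biquadratic tensor is positive semi-definite, and a strong M-biquadratic tensor is positive definite. -/

import Mathlib

noncomputable section
open Finset

/-- The biquadratic form of a biquadratic tensor. -/
def bqForm {m n : ℕ} (A : Fin m → Fin n → Fin m → Fin n → ℝ)
    (x : Fin m → ℝ) (y : Fin n → ℝ) : ℝ :=
  ∑ i1, ∑ j1, ∑ i2, ∑ j2, A i1 j1 i2 j2 * x i1 * y j1 * x i2 * y j2

/-- (λ, x, y) is an M-eigenpair of the biquadratic tensor A. -/
def IsMEigenpair {m n : ℕ} (A : Fin m → Fin n → Fin m → Fin n → ℝ)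
    (lam : ℝ) (x : Fin m → ℝ) (y : Fin n → ℝ) : Prop :=
  (∑ i, x i ^ 2 = 1) ∧ (∑ j, y j ^ 2 = 1) ∧
  (∀ i, (∑ i1, ∑ j1, ∑ j2, A i1 j1 i j2 * x i1 * y j1 * y j2)
      + (∑ i2, ∑ j1, ∑ j2, A i j1 i2 j2 * y j1 * x i2 * y j2) = 2 * lam * x i) ∧
  (∀ j, (∑ i1, ∑ i2, ∑ j1, A i1 j1 i2 j * x i1 * y j1 * x i2)
      + (∑ i1, ∑ i2, ∑ j2, A i1 j i2 j2 * x i1 * x i2 * y j2) = 2 * lam * y j)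

/-- λ is an M-eigenvalue of A. -/
def IsMEigenvalue {m n : ℕ} (A : Fin m → Fin n → Fin m → Fin n → ℝ) (lam : ℝ) : Prop :=
  ∃ x y, IsMEigenpair A lam x y

/-- A is a positive semi-definite biquadratic tensor. -/
def BQPosSemidef {m n : ℕ} (A : Fin m → Fin n → Fin m → Fin n → ℝ) : Prop :=
  ∀ x y, 0 ≤ bqForm A x y

/-- A is a positive definite biquadratic tensor. -/
def BQPosDef {m n : ℕ} (A : Fin m → Fin n → Fin m → Fin n → ℝ) : Prop :=
  ∀ x y, (∑ i, x i ^ 2 = 1) → (∑ j, y j ^ 2 = 1) → 0 < bqForm A x y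

/-- The M-identity tensor. -/
def bqId {m n : ℕ} : Fin m → Fin n → Fin m → Fin n → ℝ :=
  fun i1 j1 i2 j2 => if i1 = i2 ∧ j1 = j2 then 1 else 0

/-- A is an M-biquadratic tensor: A = αI − B with B nonnegative and α ≥ λ_max(B). -/
def IsMBQTensor {m n : ℕ} (A : Fin m → Fin n → Fin m → Fin n → ℝ) : Prop :=
  ∃ (α : ℝ) (B : Fin m → Fin n → Fin m → Fin n → ℝ),
    (∀ i1 j1 i2 j2, 0 ≤ B i1 j1 i2 j2) ∧
    (∀ i1 j1 i2 j2, A i1 j1 i2 j2 = α * bqId i1 j1 i2 j2 - B i1 j1 i2 j2) ∧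
    (∀ mu, IsMEigenvalue B mu → mu ≤ α)

/-- A is a strong M-biquadratic tensor: A = αI − B with B nonnegative and α > λ_max(B). -/
def IsStrongMBQTensor {m n : ℕ} (A : Fin m → Fin n → Fin m → Fin n → ℝ) : Prop :=
  ∃ (α : ℝ) (B : Fin m → Fin n → Fin m → Fin n → ℝ),
    (∀ i1 j1 i2 j2, 0 ≤ B i1 j1 i2 j2) ∧
    (∀ i1 j1 i2 j2, A i1 j1 i2 j2 = α * bqId i1 j1 i2 j2 - B i1 j1 i2 j2) ∧
    (∀ mu, IsMEigenvalue B mu → mu < α)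

/-!
The form of `αI − B` at a pair of unit vectors is `α − bqForm B x y`. By compactness `bqForm B`
attains its maximum over pairs of unit vectors; with either vector fixed, the form is an ordinary
quadratic form in the other one, so the Rayleigh principle in each variable shows that the maximum
is an M-eigenvalue of `B`, and `α` dominates it. Homogeneity carries nonnegativity from unit vectors
to all vectors.
-/

section UnitVector

variable {ι : Type*} [Fintype ι]

theorem toLp_mem_unitSphere_iff {x : ι → ℝ} :
    WithLp.toLp 2 x ∈ Metric.sphere (0 : EuclideanSpace ℝ ι) 1 ↔ ∑ i, x i ^ 2 = 1 := by
  simp [EuclideanSpace.sphere_zero_eq]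

theorem eq_zero_or_exists_eq_smul_unit (x : ι → ℝ) :
    x = 0 ∨ ∃ (r : ℝ) (u : ι → ℝ), ∑ i, u i ^ 2 = 1 ∧ x = r • u := by
  refine or_iff_not_imp_left.2 fun hx => ?_
  have hnorm : ‖WithLp.toLp 2 x‖ ≠ 0 := by simpa using hx
  refine ⟨‖WithLp.toLp 2 x‖, ‖WithLp.toLp 2 x‖⁻¹ • x, ?_, (smul_inv_smul₀ hnorm x).symm⟩
  rw [← toLp_mem_unitSphere_iff, mem_sphere_zero_iff_norm, WithLp.toLp_smul, norm_smul, norm_inv,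
    norm_norm, inv_mul_cancel₀ hnorm]

end UnitVector

section Rayleigh

open Matrix

variable {ι : Type*} [Fintype ι]

theorem transpose_add_mulVec_eq_smul_of_forall_unit_le (C : Matrix ι ι ℝ) {x : ι → ℝ}
    (hx : ∑ i, x i ^ 2 = 1)
    (hmax : ∀ z : ι → ℝ, ∑ i, z i ^ 2 = 1 → z ⬝ᵥ C *ᵥ z ≤ x ⬝ᵥ C *ᵥ x) :
    (Cᵀ + C) *ᵥ x = (2 * (x ⬝ᵥ C *ᵥ x)) • x := by
  classical
  let T := toEuclideanCLM (n := ι) (𝕜 := ℝ) (Cᵀ + C)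
  have hT : IsSelfAdjoint T := by
    have hsymm : IsSelfAdjoint (Cᵀ + C) := by
      simpa [star_eq_conjTranspose] using IsSelfAdjoint.star_add_self C
    exact hsymm.map toEuclideanCLM
  have hform (z : EuclideanSpace ℝ ι) :
      T.reApplyInnerSelf z = 2 * (z.ofLp ⬝ᵥ C *ᵥ z.ofLp) := by
    rw [ContinuousLinearMap.reApplyInnerSelf_apply, RCLike.re_to_real, real_inner_comm,
      inner_toEuclideanCLM, add_mulVec, dotProduct_add, dotProduct_transpose_mulVec, two_mul]
  have hnorm : ‖WithLp.toLp 2 x‖ = 1 :=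
    mem_sphere_zero_iff_norm.1 (toLp_mem_unitSphere_iff.2 hx)
  have hmaxOn : IsMaxOn T.reApplyInnerSelf
      (Metric.sphere 0 ‖WithLp.toLp 2 x‖) (WithLp.toLp 2 x) := by
    intro z hz
    rw [hnorm] at hz
    simpa [hform] using hmax z.ofLp (toLp_mem_unitSphere_iff.1 hz)
  have heigen := hT.eq_smul_self_of_isLocalExtrOn_real (Or.inr hmaxOn.localize)
  rw [ContinuousLinearMap.rayleighQuotient, hform, hnorm, one_pow, div_one] at heigen
  exact congrArg WithLp.ofLp heigen

end Rayleigh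

section BiquadraticForm

open Matrix

variable {m n : ℕ} (A : Fin m → Fin n → Fin m → Fin n → ℝ)

/-- The contraction of `A` with `y` in both of its slots: the matrix of `x ↦ bqForm A x y`,
whose symmetrization gives the first family of M-eigenpair equations. It need not be symmetric,
because no symmetry of `A` is assumed. -/
def bqMatrixLeft (y : Fin n → ℝ) : Matrix (Fin m) (Fin m) ℝ :=
  of fun i1 i2 => ∑ j1, ∑ j2, A i1 j1 i2 j2 * y j1 * y j2

/-- The contraction of `A` with `x` in both of its slots: the matrix of `y ↦ bqForm A x y`,
whose symmetrization gives the second family of M-eigenpair equations. It need not be symmetric,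
because no symmetry of `A` is assumed. -/
def bqMatrixRight (x : Fin m → ℝ) : Matrix (Fin n) (Fin n) ℝ :=
  of fun j1 j2 => ∑ i1, ∑ i2, A i1 j1 i2 j2 * x i1 * x i2

theorem dotProduct_bqMatrixLeft_mulVec (x : Fin m → ℝ) (y : Fin n → ℝ) :
    x ⬝ᵥ bqMatrixLeft A y *ᵥ x = bqForm A x y := by
  simp only [dotProduct, mulVec, bqMatrixLeft, of_apply, bqForm, mul_sum, sum_mul]
  refine sum_congr rfl fun i1 _ => sum_comm.trans ?_
  refine sum_congr rfl fun j1 _ => sum_congr rfl fun i2 _ => sum_congr rfl fun j2 _ => ?_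
  ring

theorem dotProduct_bqMatrixRight_mulVec (x : Fin m → ℝ) (y : Fin n → ℝ) :
    y ⬝ᵥ bqMatrixRight A x *ᵥ y = bqForm A x y := by
  simp only [dotProduct, mulVec, bqMatrixRight, of_apply, bqForm, mul_sum, sum_mul]
  rw [sum_comm (s := (univ : Finset (Fin m)))]
  refine sum_congr rfl fun j1 _ => sum_comm.trans ?_
  refine sum_congr rfl fun i1 _ => sum_comm.trans ?_
  refine sum_congr rfl fun i2 _ => sum_congr rfl fun j2 _ => ?_
  ring

variable {A} in
theorem isMEigenpair_iff_mulVec {lam : ℝ} {x : Fin m → ℝ} {y : Fin n → ℝ} :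
    IsMEigenpair A lam x y ↔
      ∑ i, x i ^ 2 = 1 ∧ ∑ j, y j ^ 2 = 1 ∧
      ((bqMatrixLeft A y)ᵀ + bqMatrixLeft A y) *ᵥ x = (2 * lam) • x ∧
      ((bqMatrixRight A x)ᵀ + bqMatrixRight A x) *ᵥ y = (2 * lam) • y := by
  have hleft₁ (i : Fin m) : ∑ i1, ∑ j1, ∑ j2, A i1 j1 i j2 * x i1 * y j1 * y j2 =
      ((bqMatrixLeft A y)ᵀ *ᵥ x) i := by
    simp only [mulVec, dotProduct, transpose_apply, bqMatrixLeft, of_apply, sum_mul,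
      mul_right_comm _ _ (x _)]
  have hleft₂ (i : Fin m) : ∑ i2, ∑ j1, ∑ j2, A i j1 i2 j2 * y j1 * x i2 * y j2 =
      (bqMatrixLeft A y *ᵥ x) i := by
    simp only [mulVec, dotProduct, bqMatrixLeft, of_apply, sum_mul, mul_right_comm _ (x _)]
  have hright₁ (j : Fin n) : ∑ i1, ∑ i2, ∑ j1, A i1 j1 i2 j * x i1 * y j1 * x i2 =
      ((bqMatrixRight A x)ᵀ *ᵥ y) j := by
    simp only [mulVec, dotProduct, transpose_apply, bqMatrixRight, of_apply, sum_mul,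
      mul_right_comm _ (y _) (x _)]
    exact sum_comm_cycle
  have hright₂ (j : Fin n) : ∑ i1, ∑ i2, ∑ j2, A i1 j i2 j2 * x i1 * x i2 * y j2 =
      (bqMatrixRight A x *ᵥ y) j := by
    simp only [mulVec, dotProduct, bqMatrixRight, of_apply, sum_mul]
    exact sum_comm_cycle
  simp only [IsMEigenpair, hleft₁, hleft₂, hright₁, hright₂, add_mulVec, funext_iff, Pi.add_apply,
    Pi.smul_apply, smul_eq_mul]

variable {A} in
theorem isMEigenpair_of_forall_unit_le {x : Fin m → ℝ} {y : Fin n → ℝ}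
    (hx : ∑ i, x i ^ 2 = 1) (hy : ∑ j, y j ^ 2 = 1)
    (hmax : ∀ u v, ∑ i, u i ^ 2 = 1 → ∑ j, v j ^ 2 = 1 → bqForm A u v ≤ bqForm A x y) :
    IsMEigenpair A (bqForm A x y) x y := by
  refine isMEigenpair_iff_mulVec.2 ⟨hx, hy, ?_, ?_⟩
  · rw [← dotProduct_bqMatrixLeft_mulVec]
    refine transpose_add_mulVec_eq_smul_of_forall_unit_le _ hx fun u hu => ?_
    simpa only [dotProduct_bqMatrixLeft_mulVec] using hmax u y hu hy
  · rw [← dotProduct_bqMatrixRight_mulVec]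
    refine transpose_add_mulVec_eq_smul_of_forall_unit_le _ hy fun v hv => ?_
    simpa only [dotProduct_bqMatrixRight_mulVec] using hmax x v hx hv

theorem exists_isMEigenvalue_bqForm_le {x : Fin m → ℝ} {y : Fin n → ℝ}
    (hx : ∑ i, x i ^ 2 = 1) (hy : ∑ j, y j ^ 2 = 1) :
    ∃ lam, IsMEigenvalue A lam ∧ bqForm A x y ≤ lam := by
  have hcont : Continuous fun p : EuclideanSpace ℝ (Fin m) × EuclideanSpace ℝ (Fin n) =>
      bqForm A p.1.ofLp p.2.ofLp := by
    unfold bqForm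
    fun_prop
  obtain ⟨⟨u, v⟩, ⟨hu, hv⟩, hmax⟩ :=
    ((isCompact_sphere (0 : EuclideanSpace ℝ (Fin m)) 1).prod
      (isCompact_sphere (0 : EuclideanSpace ℝ (Fin n)) 1)).exists_isMaxOn
      ⟨(WithLp.toLp 2 x, WithLp.toLp 2 y),
        toLp_mem_unitSphere_iff.2 hx, toLp_mem_unitSphere_iff.2 hy⟩
      hcont.continuousOn
  have hle (x' : Fin m → ℝ) (y' : Fin n → ℝ) (hx' : ∑ i, x' i ^ 2 = 1)
      (hy' : ∑ j, y' j ^ 2 = 1) : bqForm A x' y' ≤ bqForm A u.ofLp v.ofLp :=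
    isMaxOn_iff.1 hmax (WithLp.toLp 2 x', WithLp.toLp 2 y')
      ⟨toLp_mem_unitSphere_iff.2 hx', toLp_mem_unitSphere_iff.2 hy'⟩
  exact ⟨_, ⟨u.ofLp, v.ofLp, isMEigenpair_of_forall_unit_le (toLp_mem_unitSphere_iff.1 hu)
    (toLp_mem_unitSphere_iff.1 hv) hle⟩, hle x y hx hy⟩

theorem bqForm_smul_smul (r s : ℝ) (x : Fin m → ℝ) (y : Fin n → ℝ) :
    bqForm A (r • x) (s • y) = (r * s) ^ 2 * bqForm A x y := by
  simp only [bqForm, Pi.smul_apply, smul_eq_mul, mul_sum]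
  refine sum_congr rfl fun _ _ => sum_congr rfl fun _ _ => sum_congr rfl fun _ _ =>
    sum_congr rfl fun _ _ => ?_
  ring

variable {A} in
theorem bqPosSemidef_of_forall_unit_nonneg
    (h : ∀ x y, ∑ i, x i ^ 2 = 1 → ∑ j, y j ^ 2 = 1 → 0 ≤ bqForm A x y) : BQPosSemidef A := by
  intro x y
  rcases eq_zero_or_exists_eq_smul_unit x with rfl | ⟨r, u, hu, rfl⟩
  · simp [bqForm]
  rcases eq_zero_or_exists_eq_smul_unit y with rfl | ⟨s, v, hv, rfl⟩
  · simp [bqForm]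
  rw [bqForm_smul_smul]
  exact mul_nonneg (sq_nonneg _) (h u v hu hv)

theorem bqForm_bqId (x : Fin m → ℝ) (y : Fin n → ℝ) :
    bqForm bqId x y = (∑ i, x i ^ 2) * ∑ j, y j ^ 2 := by
  simp only [bqForm, bqId, ite_and, ite_mul, one_mul, zero_mul, sum_ite_irrel, sum_const_zero,
    sum_ite_eq, mem_univ, if_true, sum_mul_sum]
  refine sum_congr rfl fun i _ => sum_congr rfl fun j _ => ?_
  ring

theorem bqForm_smul_tensor (c : ℝ) (x : Fin m → ℝ) (y : Fin n → ℝ) :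
    bqForm (c • A) x y = c * bqForm A x y := by
  simp only [bqForm, Pi.smul_apply, smul_eq_mul, mul_sum, mul_assoc]

theorem bqForm_sub (B : Fin m → Fin n → Fin m → Fin n → ℝ) (x : Fin m → ℝ) (y : Fin n → ℝ) :
    bqForm (A - B) x y = bqForm A x y - bqForm B x y := by
  simp only [bqForm, Pi.sub_apply, sub_mul, sum_sub_distrib]

end BiquadraticForm

theorem mbq_posSemidef_general {m n : ℕ} {A B : Fin m → Fin n → Fin m → Fin n → ℝ} {α : ℝ}
    (hA : ∀ i1 j1 i2 j2, A i1 j1 i2 j2 = α * bqId i1 j1 i2 j2 - B i1 j1 i2 j2) :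
    ((∀ mu, IsMEigenvalue B mu → mu ≤ α) → BQPosSemidef A) ∧
      ((∀ mu, IsMEigenvalue B mu → mu < α) → BQPosDef A) := by
  obtain rfl : A = α • bqId - B := by
    ext i1 j1 i2 j2
    exact hA i1 j1 i2 j2
  have hform {x : Fin m → ℝ} {y : Fin n → ℝ} (hx : ∑ i, x i ^ 2 = 1) (hy : ∑ j, y j ^ 2 = 1) :
      bqForm (α • bqId - B) x y = α - bqForm B x y := by
    rw [bqForm_sub, bqForm_smul_tensor, bqForm_bqId, hx, hy, mul_one, mul_one]
  constructor
  · refine fun hB => bqPosSemidef_of_forall_unit_nonneg fun x y hx hy => ?_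
    obtain ⟨mu, hmu, hle⟩ := exists_isMEigenvalue_bqForm_le B hx hy
    rw [hform hx hy]
    exact sub_nonneg.2 (hle.trans (hB mu hmu))
  · intro hB x y hx hy
    obtain ⟨mu, hmu, hle⟩ := exists_isMEigenvalue_bqForm_le B hx hy
    rw [hform hx hy]
    exact sub_pos.2 (hle.trans_lt (hB mu hmu))

/-- An M-biquadratic tensor is positive semi-definite, and a strong M-biquadratic
tensor is positive definite. -/
theorem mbq_posSemidef {m n : ℕ} (hm : 2 ≤ m) (hn : 2 ≤ n)
    (A : Fin m → Fin n → Fin m → Fin n → ℝ) :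
    (IsMBQTensor A → BQPosSemidef A) ∧ (IsStrongMBQTensor A → BQPosDef A) :=
  ⟨fun ⟨_, _, _, hA, h⟩ => (mbq_posSemidef_general hA).1 h,
    fun ⟨_, _, _, hA, h⟩ => (mbq_posSemidef_general hA).2 h⟩
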